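/- arXiv:2110.06489 — 2 statements merged into one kernel-verified Lean document; each statement's English description precedes it below -/
import Mathlib

section
/- Let G be a finite, connected, simple graph with maximum degree at most 3, nonnegative Ricci curvature, and diameter at least 6, and let P = v_0 v_1 ⋯ v_l be a diameter path with l ≥ 6. Suppose the set K = { i : 1 ≤ i ≤ l − 1 and v_i has a neighbor u ∉ {v_{i−1}, v_{i+1}} with d(v_0, u) = i } is nonempty. Then min K ∈ {1, 2, 3, l−2, l−1}, i.e. min K ≤ 3 or min K ≥ l − 2. -/
open SimpleGraph

variable {V : Type*}

/-- Combinatorial (unnormalized) graph Laplacian. -/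
def lapl (G : SimpleGraph V) [G.LocallyFinite] (f : V → ℝ) (x : V) : ℝ :=
  ∑ y ∈ G.neighborFinset x, (f y - f x)

/-- Lin-Lu-Yau-Ollivier Ricci curvature (limit-free definition):
`κ(u,v) = inf { Δf(u) − Δf(v) : f 1-Lipschitz w.r.t. graph distance, f v − f u = 1 }`. -/
noncomputable def ricci (G : SimpleGraph V) [G.LocallyFinite] (u v : V) : ℝ :=
  sInf { r : ℝ | ∃ f : V → ℝ,
    (∀ x y : V, |f x - f y| ≤ (G.dist x y : ℝ)) ∧ f v - f u = 1 ∧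
    r = lapl G f u - lapl G f v }

/-- Nonnegative Ricci curvature on every edge. -/
def NonnegRicci (G : SimpleGraph V) [G.LocallyFinite] : Prop :=
  ∀ u v : V, G.Adj u v → 0 ≤ ricci G u v

/-- On an edge of nonnegative curvature, an integer-valued function that is 1-Lipschitz along
edges and increases by one along the edge has nonincreasing Laplacian. -/
theorem NonnegRicci.sum_le_sum {G : SimpleGraph V} [G.LocallyFinite]
    (hric : NonnegRicci G) {u v : V} (huv : G.Adj u v) (f : V → ℤ)
    (hf : ∀ x y, |f x - f y| ≤ (G.dist x y : ℤ)) (hfuv : f v = f u + 1) :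
    ∑ y ∈ G.neighborFinset v, (f y - f v) ≤ ∑ y ∈ G.neighborFinset u, (f y - f u) := by
  have hbdd : ∀ g : V → ℝ, (∀ x y, |g x - g y| ≤ (G.dist x y : ℝ)) → ∀ x,
      |lapl G g x| ≤ G.degree x := by
    intro g hg x
    calc |lapl G g x| ≤ ∑ y ∈ G.neighborFinset x, |g y - g x| := Finset.abs_sum_le_sum_abs _ _
      _ ≤ ∑ y ∈ G.neighborFinset x, (1 : ℝ) := by
          refine Finset.sum_le_sum fun y hy => ?_
          have hadj : G.Adj y x := ((G.mem_neighborFinset x y).1 hy).symm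
          have := hg y x
          rwa [SimpleGraph.dist_eq_one_iff_adj.2 hadj, Nat.cast_one] at this
      _ = G.degree x := by simp
  have hle : ricci G u v ≤ lapl G (fun x => (f x : ℝ)) u - lapl G (fun x => (f x : ℝ)) v := by
    refine csInf_le ⟨-(G.degree u + G.degree v : ℝ), ?_⟩ ⟨fun x => (f x : ℝ), ?_, ?_, rfl⟩
    · rintro r ⟨g, hg, -, rfl⟩
      have h1 := abs_le.1 (hbdd g hg u)
      have h2 := abs_le.1 (hbdd g hg v)
      linarith
    · intro x y
      have := hf x y
      dsimp only
      exact_mod_cast this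
    · simp [hfuv]
  have h0 := (hric u v huv).trans hle
  simp only [lapl] at h0
  have : ((∑ y ∈ G.neighborFinset v, (f y - f v) : ℤ) : ℝ)
      ≤ ((∑ y ∈ G.neighborFinset u, (f y - f u) : ℤ) : ℝ) := by
    push_cast
    linarith
  exact_mod_cast this

/-- In a graph of maximum degree at most 3, three distinct neighbors exhaust the neighborhood. -/
theorem eq_of_adj_of_degree_le_three {G : SimpleGraph V} [G.LocallyFinite]
    (hdeg : ∀ x : V, G.degree x ≤ 3) {x a b c d : V} (ha : G.Adj x a) (hb : G.Adj x b)
    (hc : G.Adj x c) (hab : a ≠ b) (hac : a ≠ c) (hbc : b ≠ c) (hd : G.Adj x d) :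
    d = a ∨ d = b ∨ d = c := by
  classical
  by_contra! h
  have hsub : ({d, a, b, c} : Finset V) ⊆ G.neighborFinset x := by
    intro y
    simp only [Finset.mem_insert, Finset.mem_singleton, SimpleGraph.mem_neighborFinset]
    rintro (rfl | rfl | rfl | rfl) <;> assumption
  have hcard := Finset.card_le_card hsub
  have hfour : ({d, a, b, c} : Finset V).card = 4 := by grind
  rw [hfour, G.card_neighborFinset_eq_degree] at hcard
  have := hdeg x
  omega

/-- Two vertices at distance at most two. -/
def WithinTwo (G : SimpleGraph V) (a c : V) : Prop :=
  a = c ∨ G.Adj a c ∨ ∃ z, G.Adj a z ∧ G.Adj z c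

theorem three_le_dist_of_not_withinTwo {G : SimpleGraph V} (hconn : G.Connected) {a c : V}
    (h : ¬ WithinTwo G a c) : 3 ≤ G.dist a c := by
  by_contra! hlt
  obtain ⟨p, hp⟩ := hconn.exists_walk_length_eq_dist a c
  apply h
  rw [← hp] at hlt
  match p, hlt with
  | .nil, _ => exact Or.inl rfl
  | .cons h1 .nil, _ => exact Or.inr (Or.inl h1)
  | .cons h1 (.cons h2 .nil), _ => exact Or.inr (Or.inr ⟨_, h1, h2⟩)
  | .cons _ (.cons _ (.cons _ _)), h => simp at h; omega

/-- If `u` has two neighbors `a`, `b` besides `v` and nonnegative curvature along `uv`, then `a`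
and `b` cannot both be far from the neighborhood of `v`. -/
theorem withinTwo_or_exists_adj {G : SimpleGraph V} [G.LocallyFinite] (hconn : G.Connected)
    (hdeg : ∀ x : V, G.degree x ≤ 3) (hric : NonnegRicci G) {u v a b c : V} (huv : G.Adj u v)
    (hua : G.Adj u a) (hub : G.Adj u b) (hab : a ≠ b) (hav : a ≠ v) (hbv : b ≠ v)
    (hvc : G.Adj v c) :
    WithinTwo G a c ∨ WithinTwo G b c ∨
      ∃ t, G.Adj v t ∧ t ≠ u ∧ t ≠ c ∧ (t = a ∨ G.Adj a t ∨ t = b ∨ G.Adj b t) := by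
  classical
  by_contra! h
  obtain ⟨hac, hbc, ht⟩ := h
  have hac3 := three_le_dist_of_not_withinTwo hconn hac
  have hbc3 := three_le_dist_of_not_withinTwo hconn hbc
  have tri := fun x y z : V => hconn.dist_triangle (u := x) (v := y) (w := z)
  have hd : ∀ {x y : V}, G.Adj x y → G.dist x y = 1 := SimpleGraph.dist_eq_one_iff_adj.2
  let f : V → ℤ := fun z => min (min (G.dist a z) (G.dist b z)) (G.dist u z + 1)
  have hlip : ∀ x y, |f x - f y| ≤ (G.dist x y : ℤ) := by
    intro x y
    have h1 := tri a x y
    have h2 := tri b x y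
    have h3 := tri u x y
    have h4 := tri a y x
    have h5 := tri b y x
    have h6 := tri u y x
    rw [G.dist_comm (u := y) (v := x)] at h4 h5 h6
    rw [abs_le]
    simp only [f]
    omega
  have hfa : f a = 0 := by
    simp only [f, SimpleGraph.dist_self]
    omega
  have hfb : f b = 0 := by
    simp only [f, SimpleGraph.dist_self]
    omega
  have hfu : f u = 1 := by simp [f, hd hua.symm, hd hub.symm]
  have hfv : f v = 2 := by
    have h1 := tri a v c
    have h2 := tri b v c
    have h3 := hd hvc
    have h4 := hd huv
    simp only [f]
    omega
  have hfc : f c = 3 := by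
    have h1 := tri a u c
    have h2 := hd hua.symm
    have h3 := tri u v c
    have h4 := hd huv
    have h5 := hd hvc
    simp only [f]
    omega
  have hft : ∀ t, G.Adj v t → t ≠ u → t ≠ c → 2 ≤ f t := by
    intro t hvt htu htc
    obtain ⟨hta, hat, htb, hbt⟩ := ht t hvt htu htc
    have h1 : G.dist u t ≠ 0 := fun h => htu (hconn.dist_eq_zero_iff.1 h).symm
    have h2 : G.dist a t ≠ 0 := fun h => hta (hconn.dist_eq_zero_iff.1 h).symm
    have h3 : G.dist b t ≠ 0 := fun h => htb (hconn.dist_eq_zero_iff.1 h).symm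
    have h4 : G.dist a t ≠ 1 := fun h => hat (SimpleGraph.dist_eq_one_iff_adj.1 h)
    have h5 : G.dist b t ≠ 1 := fun h => hbt (SimpleGraph.dist_eq_one_iff_adj.1 h)
    simp only [f]
    omega
  have key := hric.sum_le_sum huv f hlip (by rw [hfu, hfv]; norm_num)
  have hNu : G.neighborFinset u = {v, a, b} := by
    ext y
    simp only [SimpleGraph.mem_neighborFinset, Finset.mem_insert, Finset.mem_singleton]
    constructor
    · exact eq_of_adj_of_degree_le_three hdeg huv hua hub hav.symm hbv.symm hab
    · rintro (rfl | rfl | rfl) <;> assumption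
  have hsu : ∑ y ∈ G.neighborFinset u, (f y - f u) = -1 := by
    rw [hNu, Finset.sum_insert (by simp [hav.symm, hbv.symm]), Finset.sum_pair hab,
      hfa, hfb, hfu, hfv]
    norm_num
  have huc : u ≠ c := by
    rintro rfl
    rw [hfu] at hfc
    norm_num at hfc
  have hsub : ({u, c} : Finset V) ⊆ G.neighborFinset v := by
    intro y
    simp only [SimpleGraph.mem_neighborFinset, Finset.mem_insert, Finset.mem_singleton]
    rintro (rfl | rfl)
    exacts [huv.symm, hvc]
  have hsv : 0 ≤ ∑ y ∈ G.neighborFinset v, (f y - f v) := by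
    rw [← Finset.sum_sdiff hsub, Finset.sum_pair huc, hfu, hfc, hfv]
    refine add_nonneg (Finset.sum_nonneg fun t htm => ?_) (by norm_num)
    simp only [Finset.mem_sdiff, SimpleGraph.mem_neighborFinset, Finset.mem_insert,
      Finset.mem_singleton, not_or] at htm
    linarith [hft t htm.1 htm.2.1 htm.2.2]
  linarith

/-- A vertex at positive distance from `o` has a neighbor one step closer to `o`. -/
theorem exists_adj_dist_add_one_eq {G : SimpleGraph V} (hconn : G.Connected) (o x : V)
    (hx : 0 < G.dist o x) : ∃ y, G.Adj x y ∧ G.dist o y + 1 = G.dist o x := by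
  obtain ⟨p, hp⟩ := hconn.exists_walk_length_eq_dist x o
  rw [G.dist_comm] at hx
  match p, hp with
  | .nil, _ => simp at hx
  | .cons (v := y) h q, hp =>
    refine ⟨y, h, ?_⟩
    have h1 := SimpleGraph.dist_le q
    have h2 := hconn.dist_triangle (u := x) (v := y) (w := o)
    rw [SimpleGraph.dist_eq_one_iff_adj.2 h] at h2
    rw [SimpleGraph.Walk.length_cons] at hp
    rw [G.dist_comm (u := o) (v := y), G.dist_comm (u := o) (v := x)]
    omega

/-- The distance to a fixed vertex is 1-Lipschitz along edges. -/
theorem SimpleGraph.Connected.dist_le_of_adj {G : SimpleGraph V} (hconn : G.Connected) (o : V)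
    {x y : V} (h : G.Adj x y) : G.dist o x ≤ G.dist o y + 1 := by
  have := hconn.dist_triangle (u := o) (v := y) (w := x)
  rwa [SimpleGraph.dist_eq_one_iff_adj.2 h.symm] at this

theorem ne_of_dist (G : SimpleGraph V) (o : V) {x y : V} (h : G.dist o x ≠ G.dist o y) :
    x ≠ y :=
  ne_of_apply_ne (G.dist o) h

theorem WithinTwo.dist_le {G : SimpleGraph V} {x y : V} (h : WithinTwo G x y)
    (hconn : G.Connected) (o : V) :
    G.dist o x ≤ G.dist o y + 2 ∧ G.dist o y ≤ G.dist o x + 2 := by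
  rcases h with rfl | h | ⟨z, h, h'⟩
  · omega
  · have := hconn.dist_le_of_adj o h
    have := hconn.dist_le_of_adj o h.symm
    omega
  · have := hconn.dist_le_of_adj o h
    have := hconn.dist_le_of_adj o h.symm
    have := hconn.dist_le_of_adj o h'
    have := hconn.dist_le_of_adj o h'.symm
    omega

/-- Along a geodesic `p₀ ⋯ p₇`, the vertex `p₄` has no horizontal neighbor if `p₃` has a third
neighbor that is not horizontal. -/
theorem no_horizontal_neighbor_of_third_neighbor {G : SimpleGraph V} [G.LocallyFinite]
    (hconn : G.Connected) (hdeg : ∀ x : V, G.degree x ≤ 3) (hric : NonnegRicci G)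
    {o p₀ p₁ p₂ p₃ p₄ p₅ p₆ p₇ u : V} {j : ℕ}
    (h₀ : G.dist o p₀ = j) (h₁ : G.dist o p₁ = j + 1) (h₂ : G.dist o p₂ = j + 2)
    (h₃ : G.dist o p₃ = j + 3) (h₄ : G.dist o p₄ = j + 4) (h₅ : G.dist o p₅ = j + 5)
    (h₆ : G.dist o p₆ = j + 6) (h₇ : G.dist o p₇ = j + 7)
    (a₀ : G.Adj p₀ p₁) (a₁ : G.Adj p₁ p₂) (a₂ : G.Adj p₂ p₃) (a₃ : G.Adj p₃ p₄)
    (a₄ : G.Adj p₄ p₅) (a₅ : G.Adj p₅ p₆) (a₆ : G.Adj p₆ p₇)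
    (hu : G.Adj p₄ u) (hLu : G.dist o u = j + 4)
    {z : V} (hz : G.Adj p₃ z) (hz2 : z ≠ p₂) (hz4 : z ≠ p₄) (hzh : G.dist o z ≠ j + 3) :
    False := by
  have full₄ : ∀ t, G.Adj p₄ t → t = p₃ ∨ t = p₅ ∨ t = u := fun t =>
    eq_of_adj_of_degree_le_three hdeg a₃.symm a₄ hu (ne_of_dist G o (by omega))
      (ne_of_dist G o (by omega)) (ne_of_dist G o (by omega))
  have hu4 : u ≠ p₄ := hu.ne'
  have hLz : G.dist o z = j + 4 := by
    have := hconn.dist_le_of_adj o hz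
    have := hconn.dist_le_of_adj o hz.symm
    rcases withinTwo_or_exists_adj hconn hdeg hric a₃ a₂.symm hz hz2.symm
        (ne_of_dist G o (by omega)) hz4 a₄ with h | h | ⟨t, ht, ht3, ht5, h⟩
    · have := h.dist_le hconn o
      omega
    · have := h.dist_le hconn o
      omega
    · obtain rfl : t = u := by grind
      rcases h with h | h | h | h
      · grind
      · have := hconn.dist_le_of_adj o h.symm
        omega
      · grind
      · have := hconn.dist_le_of_adj o h.symm
        omega
  have full₃ : ∀ t, G.Adj p₃ t → t = p₂ ∨ t = p₄ ∨ t = z := fun t =>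
    eq_of_adj_of_degree_le_three hdeg a₂.symm a₃ hz (ne_of_dist G o (by omega)) hz2.symm hz4.symm
  obtain ⟨y, hy2, hyz, hLy, hy3⟩ :
      ∃ y, G.Adj p₂ y ∧ G.Adj z y ∧ G.dist o y = j + 3 ∧ y ≠ p₃ := by
    rcases withinTwo_or_exists_adj hconn hdeg hric a₂.symm a₃ hz hz4.symm
        (ne_of_dist G o (by omega)) hz2 a₁.symm with
      h | h | ⟨t, ht, ht3, ht1, h⟩
    · have := h.dist_le hconn o
      omega
    · have := h.dist_le hconn o
      omega
    · have := hconn.dist_le_of_adj o ht.symm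
      have : G.Adj z t := by
        rcases h with h | h | h | h
        · grind
        · grind
        · grind
        · exact h
      have := hconn.dist_le_of_adj o this
      exact ⟨t, ht, by assumption, by omega, ht3⟩
  obtain ⟨x, hx1, hyx, hLx, hx2⟩ :
      ∃ x, G.Adj p₁ x ∧ G.Adj y x ∧ G.dist o x = j + 2 ∧ x ≠ p₂ := by
    rcases withinTwo_or_exists_adj hconn hdeg hric a₁.symm a₂ hy2 hy3.symm
        (ne_of_dist G o (by omega)) (ne_of_dist G o (by omega)) a₀.symm with
      h | h | ⟨t, ht, ht2, ht0, h⟩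
    · have := h.dist_le hconn o
      omega
    · have := h.dist_le hconn o
      omega
    · have := hconn.dist_le_of_adj o ht.symm
      have : G.Adj y t := by
        rcases h with h | h | h | h
        · grind
        · grind
        · grind
        · exact h
      have := hconn.dist_le_of_adj o this
      exact ⟨t, ht, by assumption, by omega, ht2⟩
  have fully : ∀ t, G.Adj y t → t = p₂ ∨ t = x ∨ t = z := fun t =>
    eq_of_adj_of_degree_le_three hdeg hy2.symm hyx hyz.symm hx2.symm (ne_of_dist G o (by omega))
      (ne_of_dist G o (by omega))
  have hz5 : ¬ G.Adj z p₅ := by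
    intro hz5
    have fullz : ∀ t, G.Adj z t → t = p₃ ∨ t = y ∨ t = p₅ := fun t =>
      eq_of_adj_of_degree_le_three hdeg hz.symm hyz hz5 hy3.symm (ne_of_dist G o (by omega))
        (ne_of_dist G o (by omega))
    rcases withinTwo_or_exists_adj hconn hdeg hric a₅ a₄.symm hz5.symm hz4.symm
        (ne_of_dist G o (by omega)) (ne_of_dist G o (by omega)) a₆ with
      h | h | ⟨t, ht, ht5, ht7, h⟩
    · have := h.dist_le hconn o
      omega
    · have := h.dist_le hconn o
      omega
    · have := hconn.dist_le_of_adj o ht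
      grind
  have hzu : z = u ∨ G.Adj z u := by
    rcases withinTwo_or_exists_adj hconn hdeg hric a₃.symm a₄ hu (ne_of_dist G o (by omega))
        (ne_of_dist G o (by omega)) (ne_of_dist G o (by omega)) a₂.symm with
      h | h | ⟨t, ht, ht4, ht2, h⟩
    · have := h.dist_le hconn o
      omega
    · rcases h with h | h | ⟨t, h, h'⟩
      · grind
      · have := hconn.dist_le_of_adj o h
        omega
      · have := hconn.dist_le_of_adj o h
        have ht : t = p₁ ∨ t = p₃ ∨ t = y :=
          eq_of_adj_of_degree_le_three hdeg a₁.symm a₂ hy2 (ne_of_dist G o (by omega))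
            (ne_of_dist G o (by omega)) hy3.symm h'.symm
        rcases ht with rfl | rfl | rfl
        · omega
        · rcases full₃ u h.symm with rfl | e | e
          · omega
          · exact absurd e hu4
          · exact Or.inl e.symm
        · rcases fully u h.symm with rfl | rfl | e
          · omega
          · omega
          · exact Or.inl e.symm
    · obtain rfl : t = z := by grind
      rcases h with rfl | h | h | h
      · omega
      · exact absurd h.symm hz5
      · exact Or.inl h
      · exact Or.inr h.symm
  rcases hzu with rfl | hzu
  · have fullz : ∀ t, G.Adj z t → t = p₃ ∨ t = y ∨ t = p₄ := fun t =>
      eq_of_adj_of_degree_le_three hdeg hz.symm hyz hu.symm hy3.symm (ne_of_dist G o (by omega))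
        (ne_of_dist G o (by omega))
    rcases withinTwo_or_exists_adj hconn hdeg hric a₄ a₃.symm hu (ne_of_dist G o (by omega))
        (ne_of_dist G o (by omega)) (ne_of_dist G o (by omega)) a₅ with
      h | h | ⟨t, ht, ht4, ht6, h⟩
    · have := h.dist_le hconn o
      omega
    · rcases h with h | h | ⟨t, h, h'⟩
      · grind
      · have := hconn.dist_le_of_adj o h.symm
        omega
      · have := hconn.dist_le_of_adj o h'.symm
        grind
    · have := hconn.dist_le_of_adj o ht
      have := ht.symm
      grind
  · have fullz : ∀ t, G.Adj z t → t = p₃ ∨ t = y ∨ t = u := fun t =>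
      eq_of_adj_of_degree_le_three hdeg hz.symm hyz hzu hy3.symm (ne_of_dist G o (by omega))
        (ne_of_dist G o (by omega))
    obtain ⟨q, hq, hLq⟩ := exists_adj_dist_add_one_eq hconn o u (by omega)
    have fullu : ∀ t, G.Adj u t → t = z ∨ t = p₄ ∨ t = q := fun t =>
      eq_of_adj_of_degree_le_three hdeg hzu.symm hu.symm hq hz4 (ne_of_dist G o (by omega))
        (ne_of_dist G o (by omega))
    rcases withinTwo_or_exists_adj hconn hdeg hric a₄ a₃.symm hu (ne_of_dist G o (by omega))
        (ne_of_dist G o (by omega)) (ne_of_dist G o (by omega)) a₅ with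
      h | h | ⟨t, ht, ht4, ht6, h⟩
    · have := h.dist_le hconn o
      omega
    · rcases h with h | h | ⟨t, h, h'⟩
      · grind
      · have := hconn.dist_le_of_adj o h.symm
        omega
      · have := hconn.dist_le_of_adj o h'.symm
        grind
    · have := hconn.dist_le_of_adj o ht
      have := ht.symm
      grind

/-- Along a geodesic `p₀ ⋯ p₇`, the vertex `p₄` has no horizontal neighbor if `p₃` has
degree two. -/
theorem no_horizontal_neighbor_of_no_third_neighbor {G : SimpleGraph V} [G.LocallyFinite]
    (hconn : G.Connected) (hdeg : ∀ x : V, G.degree x ≤ 3) (hric : NonnegRicci G)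
    {o p₀ p₁ p₂ p₃ p₄ p₅ p₆ p₇ u : V} {j : ℕ}
    (h₀ : G.dist o p₀ = j) (h₁ : G.dist o p₁ = j + 1) (h₂ : G.dist o p₂ = j + 2)
    (h₃ : G.dist o p₃ = j + 3) (h₄ : G.dist o p₄ = j + 4) (h₅ : G.dist o p₅ = j + 5)
    (h₆ : G.dist o p₆ = j + 6) (h₇ : G.dist o p₇ = j + 7)
    (a₀ : G.Adj p₀ p₁) (a₁ : G.Adj p₁ p₂) (a₂ : G.Adj p₂ p₃) (a₃ : G.Adj p₃ p₄)
    (a₄ : G.Adj p₄ p₅) (a₅ : G.Adj p₅ p₆) (a₆ : G.Adj p₆ p₇)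
    (hu : G.Adj p₄ u) (hLu : G.dist o u = j + 4)
    (full₃ : ∀ t, G.Adj p₃ t → t = p₂ ∨ t = p₄) : False := by
  have full₄ : ∀ t, G.Adj p₄ t → t = p₃ ∨ t = p₅ ∨ t = u := fun t =>
    eq_of_adj_of_degree_le_three hdeg a₃.symm a₄ hu (ne_of_dist G o (by omega))
      (ne_of_dist G o (by omega)) (ne_of_dist G o (by omega))
  have hu4 : u ≠ p₄ := hu.ne'
  have hu3 : ¬ G.Adj u p₃ := by
    intro h
    rcases full₃ u h.symm with rfl | rfl
    · omega
    · exact hu4 rfl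
  obtain ⟨w, huw, hw2⟩ : ∃ w, G.Adj u w ∧ G.Adj w p₂ := by
    rcases withinTwo_or_exists_adj hconn hdeg hric a₃.symm a₄ hu (ne_of_dist G o (by omega))
        (ne_of_dist G o (by omega)) (ne_of_dist G o (by omega)) a₂.symm with
      h | h | ⟨t, ht, ht4, ht2, h⟩
    · have := h.dist_le hconn o
      omega
    · rcases h with h | h | h
      · grind
      · have := hconn.dist_le_of_adj o h
        omega
      · exact h
    · grind
  have hw3 : w ≠ p₃ := by grind
  have hLw : G.dist o w = j + 3 := by
    have := hconn.dist_le_of_adj o huw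
    have := hconn.dist_le_of_adj o hw2
    omega
  have full₂ : ∀ t, G.Adj p₂ t → t = p₁ ∨ t = p₃ ∨ t = w := fun t =>
    eq_of_adj_of_degree_le_three hdeg a₁.symm a₂ hw2.symm (ne_of_dist G o (by omega))
      (ne_of_dist G o (by omega)) hw3.symm
  obtain ⟨x, hx1, hwx, hLx, hx2⟩ :
      ∃ x, G.Adj p₁ x ∧ G.Adj w x ∧ G.dist o x = j + 2 ∧ x ≠ p₂ := by
    rcases withinTwo_or_exists_adj hconn hdeg hric a₁.symm a₂ hw2.symm hw3.symm
        (ne_of_dist G o (by omega)) (ne_of_dist G o (by omega)) a₀.symm with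
      h | h | ⟨t, ht, ht2, ht0, h⟩
    · have := h.dist_le hconn o
      omega
    · have := h.dist_le hconn o
      omega
    · have := hconn.dist_le_of_adj o ht.symm
      have : G.Adj w t := by
        rcases h with h | h | h | h
        · grind
        · grind
        · grind
        · exact h
      have := hconn.dist_le_of_adj o this
      exact ⟨t, ht, by assumption, by omega, ht2⟩
  have fullw : ∀ t, G.Adj w t → t = u ∨ t = p₂ ∨ t = x := fun t =>
    eq_of_adj_of_degree_le_three hdeg huw.symm hw2 hwx (ne_of_dist G o (by omega))
      (ne_of_dist G o (by omega)) hx2.symm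
  have hlow : ∀ q, G.Adj u q → q ≠ w → q ≠ p₄ → G.dist o q ≤ j + 4 := by
    intro q hq hqw hq4
    have hqu := hconn.dist_le_of_adj o hq
    rcases withinTwo_or_exists_adj hconn hdeg hric huw hu.symm hq hq4.symm
        (ne_of_dist G o (by omega)) hqw hwx with
      h | h | ⟨t, ht, htu, htx, h⟩
    · rcases h with h | h | ⟨t, h, h'⟩
      · grind
      · have := hconn.dist_le_of_adj o h
        omega
      · have := hconn.dist_le_of_adj o h'.symm
        have := hconn.dist_le_of_adj o h'
        rcases full₄ t h with rfl | rfl | rfl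
        · grind
        · omega
        · omega
    · have := h.dist_le hconn o
      omega
    · obtain rfl : t = p₂ := by grind
      rcases h with h | h | h | h
      · grind
      · have := hconn.dist_le_of_adj o h
        omega
      · grind
      · have := hconn.dist_le_of_adj o h
        omega
  obtain ⟨p, hp5, hpu, hp4, hp6⟩ : ∃ p, G.Adj p₅ p ∧ G.Adj u p ∧ p ≠ p₄ ∧ p ≠ p₆ := by
    by_cases hp : ∃ p, G.Adj p₅ p ∧ p ≠ p₄ ∧ p ≠ p₆
    · obtain ⟨p, hp5, hp4, hp6⟩ := hp
      have hLp := hconn.dist_le_of_adj o hp5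
      have hu5 : p ≠ u := by
        rintro rfl
        have := hlow p₅ hp5.symm (ne_of_dist G o (by omega)) (ne_of_dist G o (by omega))
        omega
      refine ⟨p, hp5, ?_, hp4, hp6⟩
      rcases withinTwo_or_exists_adj hconn hdeg hric a₄.symm a₅ hp5 hp6.symm
          (ne_of_dist G o (by omega)) hp4 a₃.symm with
        h | h | ⟨t, ht, ht5, ht3, h⟩
      · have := h.dist_le hconn o
        omega
      · rcases h with h | h | ⟨t, h, h'⟩
        · grind
        · have := full₃ p h.symm
          grind
        · have := hconn.dist_le_of_adj o h
          have := full₄ p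
          have := hp5.ne
          have := h.symm
          rcases full₃ t h'.symm with rfl | rfl
          · omega
          · grind
      · obtain rfl : t = u := by grind
        rcases h with h | h | h | h
        · grind
        · have := hconn.dist_le_of_adj o h
          omega
        · grind
        · exact h.symm
    · exfalso
      rcases withinTwo_or_exists_adj hconn hdeg hric a₄ a₃.symm hu (ne_of_dist G o (by omega))
          (ne_of_dist G o (by omega)) (ne_of_dist G o (by omega)) a₅ with
        h | h | ⟨t, ht, ht4, ht6, h⟩
      · have := h.dist_le hconn o
        omega
      · rcases h with h | h | ⟨t, h, h'⟩
        · grind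
        · have := hconn.dist_le_of_adj o h.symm
          omega
        · have := hconn.dist_le_of_adj o h'.symm
          have := hlow t h (ne_of_dist G o (by omega)) (ne_of_dist G o (by omega))
          omega
      · exact hp ⟨t, ht, ht4, ht6⟩
  have hLp : G.dist o p = j + 4 := by
    have := hconn.dist_le_of_adj o hp5
    have := hlow p hpu (ne_of_dist G o (by omega)) hp4
    omega
  rcases withinTwo_or_exists_adj hconn hdeg hric a₅ a₄.symm hp5 hp4.symm
      (ne_of_dist G o (by omega)) hp6 a₆ with
    h | h | ⟨t, ht, ht5, ht7, h⟩
  · have := h.dist_le hconn o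
    omega
  · have := h.dist_le hconn o
    omega
  · have hLt := hconn.dist_le_of_adj o ht
    have hpt : G.Adj p t := by
      rcases h with h | h | h | h
      · grind
      · grind
      · grind
      · exact h
    obtain ⟨q, hq, hLq⟩ := exists_adj_dist_add_one_eq hconn o p (by omega)
    have := eq_of_adj_of_degree_le_three hdeg hpu.symm hp5.symm hpt (ne_of_dist G o (by omega))
      (ne_of_dist G o (by omega)) ht5.symm hq
    grind

/-- Let `P = v 0, …, v l` (`l ≥ 6`) be a diameter path of a finite,
connected simple graph `G` with maximum degree at most 3 and nonnegative Ricci curvature,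
and let `K` be the set of indices `1 ≤ i ≤ l − 1` such that `v i` has a third neighbor at
distance `i` from `v 0`. If `K` is nonempty then `min K ≤ 3` or `min K ≥ l − 2`. -/
theorem min_horizontal_index (G : SimpleGraph V) [Fintype V] [G.LocallyFinite]
    (hconn : G.Connected) (hdeg : ∀ x : V, G.degree x ≤ 3) (hric : NonnegRicci G)
    (l : ℕ) (hl : 6 ≤ l) (v : ℕ → V)
    (hadj : ∀ i < l, G.Adj (v i) (v (i + 1)))
    (hinj : ∀ i ≤ l, ∀ j ≤ l, v i = v j → i = j)
    (hgeo : G.dist (v 0) (v l) = l)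
    (hdiam : ∀ x y : V, G.dist x y ≤ l)
    (K : Set ℕ)
    (hK : K = { i : ℕ | 1 ≤ i ∧ i ≤ l - 1 ∧
      ∃ u : V, G.Adj (v i) u ∧ u ≠ v (i - 1) ∧ u ≠ v (i + 1) ∧ G.dist (v 0) u = i })
    (hne : K.Nonempty) :
    sInf K ≤ 3 ∨ l - 2 ≤ sInf K := by
  by_contra! hcon
  have hmem := Nat.sInf_mem hne
  obtain ⟨j, hj⟩ : ∃ j, sInf K = j + 4 := ⟨sInf K - 4, by omega⟩
  have hnot : j + 3 ∉ K := Nat.notMem_of_lt_sInf (by omega)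
  rw [hj, hK] at hmem
  rw [hK] at hnot
  obtain ⟨-, -, u, hu, -, -, hLu⟩ := hmem
  have hle : ∀ i n, i + n ≤ l → G.dist (v i) (v (i + n)) ≤ n := by
    intro i n
    induction n with
    | zero => simp
    | succ n ih =>
      intro h
      have h1 := hconn.dist_triangle (u := v i) (v := v (i + n)) (w := v (i + n + 1))
      rw [SimpleGraph.dist_eq_one_iff_adj.2 (hadj (i + n) (by omega))] at h1
      have h2 := ih (by omega)
      rw [← add_assoc]
      omega
  have hL : ∀ i ≤ l, G.dist (v 0) (v i) = i := by
    intro i hi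
    have h1 := hle 0 i (by omega)
    have h2 := hle i (l - i) (by omega)
    rw [zero_add] at h1
    rw [Nat.add_sub_cancel' hi] at h2
    have h3 := hconn.dist_triangle (u := v 0) (v := v i) (w := v l)
    omega
  have h := fun n (hn : n ≤ 7) => hL (j + n) (by omega)
  have a := fun n (hn : n < 7) => hadj (j + n) (by omega)
  by_cases hthird : ∃ z, G.Adj (v (j + 3)) z ∧ z ≠ v (j + 2) ∧ z ≠ v (j + 4)
  · obtain ⟨z, hz, hz2, hz4⟩ := hthird
    exact no_horizontal_neighbor_of_third_neighbor hconn hdeg hric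
      (h 0 (by omega)) (h 1 (by omega)) (h 2 (by omega)) (h 3 (by omega)) (h 4 (by omega))
      (h 5 (by omega)) (h 6 (by omega)) (h 7 (by omega)) (a 0 (by omega)) (a 1 (by omega))
      (a 2 (by omega)) (a 3 (by omega)) (a 4 (by omega)) (a 5 (by omega)) (a 6 (by omega))
      hu hLu hz hz2 hz4 fun hLz => hnot ⟨by omega, by omega, z, hz, hz2, hz4, hLz⟩
  · exact no_horizontal_neighbor_of_no_third_neighbor hconn hdeg hric
      (h 0 (by omega)) (h 1 (by omega)) (h 2 (by omega)) (h 3 (by omega)) (h 4 (by omega))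
      (h 5 (by omega)) (h 6 (by omega)) (h 7 (by omega)) (a 0 (by omega)) (a 1 (by omega))
      (a 2 (by omega)) (a 3 (by omega)) (a 4 (by omega)) (a 5 (by omega)) (a 6 (by omega))
      hu hLu fun t ht => by by_contra! hne'; exact hthird ⟨t, ht, hne'⟩
end

section
/- Let G be a connected, simple graph with maximum degree at most 3, nonnegative Ricci curvature, and diameter at least 6, and let P = v_0 v_1 ⋯ v_l be a geodesic path with l ≥ 4. If for some i with 2 ≤ i ≤ l − 1 the vertex v_i has a neighbor u_i ∉ {v_{i−1}, v_{i+1}} with d(v_0, u_i) = i − 1, then for every j with i ≤ j ≤ l − 1, the vertex v_j has a neighbor u_j ∉ {v_{j−1}, v_{j+1}} with d(v_0, u_j) = j − 1. -/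
open SimpleGraph

variable {V : Type*}

open Finset in
lemma abs_lapl_le_degree (G : SimpleGraph V) [G.LocallyFinite] {f : V → ℝ}
    (hf : ∀ x y : V, |f x - f y| ≤ (G.dist x y : ℝ)) (x : V) :
    |lapl G f x| ≤ G.degree x := by
  refine (abs_sum_le_sum_abs _ _).trans ?_
  calc ∑ y ∈ G.neighborFinset x, |f y - f x| ≤ ∑ _y ∈ G.neighborFinset x, (1 : ℝ) := by
        refine sum_le_sum fun y hy => ?_
        have hxy : G.Adj x y := by simpa using hy
        simpa [SimpleGraph.dist_eq_one_iff_adj.2 hxy.symm] using hf y x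
    _ = G.degree x := by simp

/-- Every admissible test function bounds the curvature from above. -/
lemma ricci_le (G : SimpleGraph V) [G.LocallyFinite] {f : V → ℝ} {u v : V}
    (hf : ∀ x y : V, |f x - f y| ≤ (G.dist x y : ℝ)) (huv : f v - f u = 1) :
    ricci G u v ≤ lapl G f u - lapl G f v := by
  refine csInf_le ⟨-(G.degree u + G.degree v : ℝ), ?_⟩ ⟨f, hf, huv, rfl⟩
  rintro r ⟨g, hg, -, rfl⟩
  have hu := abs_le.1 (abs_lapl_le_degree G hg u)
  have hv := abs_le.1 (abs_lapl_le_degree G hg v)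
  linarith [hu.1, hv.2]

lemma abs_dist_sub_dist_le {G : SimpleGraph V} (hconn : G.Connected) (o x y : V) :
    |(G.dist o x : ℝ) - G.dist o y| ≤ G.dist x y := by
  have hx : G.dist o x ≤ G.dist o y + G.dist y x := hconn.dist_triangle
  have hy : G.dist o y ≤ G.dist o x + G.dist x y := hconn.dist_triangle
  rw [G.dist_comm (u := y)] at hx
  rw [abs_le]
  constructor
  · have : (G.dist o y : ℝ) ≤ G.dist o x + G.dist x y := mod_cast hy
    linarith
  · have : (G.dist o x : ℝ) ≤ G.dist o y + G.dist x y := mod_cast hx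
    linarith

/-- Along an edge pointing away from `o`, the Laplacian of the distance from `o` does not
increase when the curvature is nonnegative. -/
lemma NonnegRicci.lapl_dist_le {G : SimpleGraph V} [G.LocallyFinite] (hric : NonnegRicci G)
    (hconn : G.Connected) {o x y : V} (hxy : G.Adj x y) (hd : G.dist o y = G.dist o x + 1) :
    lapl G (fun z => (G.dist o z : ℝ)) y ≤ lapl G (fun z => (G.dist o z : ℝ)) x := by
  have h := (hric x y hxy).trans
    (ricci_le G (f := fun z => (G.dist o z : ℝ)) (abs_dist_sub_dist_le hconn o) (by simp [hd]))
  linarith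

/-- Initial segments of a geodesic are geodesic. -/
lemma dist_eq_of_geodesic {G : SimpleGraph V} (hconn : G.Connected) {l : ℕ} {v : ℕ → V}
    (hadj : ∀ i < l, G.Adj (v i) (v (i + 1))) (hgeo : G.dist (v 0) (v l) = l) {k : ℕ}
    (hk : k ≤ l) : G.dist (v 0) (v k) = k := by
  have step : ∀ m, ∀ n, m + n ≤ l → G.dist (v m) (v (m + n)) ≤ n := by
    intro m n
    induction n with
    | zero => simp
    | succ n ih =>
      intro hmn
      have htri : G.dist (v m) (v (m + n + 1)) ≤
          G.dist (v m) (v (m + n)) + G.dist (v (m + n)) (v (m + n + 1)) := hconn.dist_triangle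
      rw [SimpleGraph.dist_eq_one_iff_adj.2 (hadj (m + n) (by omega))] at htri
      have := ih (by omega)
      rw [← add_assoc]
      omega
  have hleft := step 0 k (by omega)
  have hright := step k (l - k) (by omega)
  have htri : G.dist (v 0) (v l) ≤ G.dist (v 0) (v k) + G.dist (v k) (v l) :=
    hconn.dist_triangle
  rw [Nat.add_sub_cancel' hk] at hright
  rw [zero_add] at hleft
  omega

open Finset in
/-- If a vertex of degree at most 3 has two neighbors closer to `o` and one farther away, then
the Laplacian of the distance from `o` is `-1` there. -/
lemma lapl_dist_eq_neg_one {G : SimpleGraph V} [G.LocallyFinite] {o x a b c : V}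
    (hdeg : G.degree x ≤ 3) (ha : G.Adj x a) (hb : G.Adj x b) (hc : G.Adj x c) (hab : a ≠ b)
    (hda : G.dist o a + 1 = G.dist o x) (hdb : G.dist o b + 1 = G.dist o x)
    (hdc : G.dist o c = G.dist o x + 1) :
    lapl G (fun z => (G.dist o z : ℝ)) x = -1 := by
  classical
  have hac : a ≠ c := by rintro rfl; omega
  have hbc : b ≠ c := by rintro rfl; omega
  have hN : ({a, b, c} : Finset V) = G.neighborFinset x := by
    refine eq_of_subset_of_card_le ?_ ?_
    · intro z hz
      simp only [mem_insert, mem_singleton] at hz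
      rcases hz with rfl | rfl | rfl <;> simpa
    · rw [card_eq_three.2 ⟨a, b, c, hab, hac, hbc, rfl⟩]
      simpa using hdeg
  rw [lapl, ← hN, sum_insert (by simp [hab, hac]), sum_pair hbc, hdc, ← hda]
  have : (G.dist o b : ℝ) = G.dist o a := mod_cast (by omega : G.dist o b = G.dist o a)
  push_cast
  linarith

open Finset in
/-- If the Laplacian of the distance from `o` is negative at `x`, and `x` has a neighbor `c`
farther away, then `x` has at least two neighbors closer to `o`. -/
lemma exists_closer_neighbor_of_lapl_dist_neg {G : SimpleGraph V} [G.LocallyFinite]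
    (hconn : G.Connected) {o x a c : V} (ha : G.Adj x a) (hc : G.Adj x c)
    (hda : G.dist o a + 1 = G.dist o x) (hdc : G.dist o c = G.dist o x + 1)
    (hneg : lapl G (fun z => (G.dist o z : ℝ)) x < 0) :
    ∃ b, G.Adj x b ∧ b ≠ a ∧ b ≠ c ∧ G.dist o b + 1 = G.dist o x := by
  classical
  by_contra! hno
  refine hneg.not_ge ?_
  have hac : a ≠ c := by rintro rfl; omega
  have hsub : ({a, c} : Finset V) ⊆ G.neighborFinset x := by
    intro z hz
    simp only [mem_insert, mem_singleton] at hz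
    rcases hz with rfl | rfl <;> simpa
  calc (0 : ℝ) = ∑ y ∈ {a, c}, ((G.dist o y : ℝ) - G.dist o x) := by
        rw [sum_pair hac, hdc, ← hda]; push_cast; ring
    _ ≤ lapl G (fun z => (G.dist o z : ℝ)) x := by
        refine sum_le_sum_of_subset_of_nonneg hsub fun y hy hy' => ?_
        have hxy : G.Adj x y := by simpa using hy
        simp only [mem_insert, mem_singleton, not_or] at hy'
        have htri : G.dist o x ≤ G.dist o y + G.dist y x := hconn.dist_triangle
        rw [SimpleGraph.dist_eq_one_iff_adj.2 hxy.symm] at htri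
        have hne := hno y hxy hy'.1 hy'.2
        exact sub_nonneg.2 (mod_cast (by omega : G.dist o x ≤ G.dist o y))


/-- Let `P = v 0, …, v l` (`l ≥ 4`) be a geodesic path in a connected
simple graph `G` with maximum degree at most 3, nonnegative Ricci curvature and diameter
at least 6. If some `v i` (`2 ≤ i ≤ l − 1`) has a third neighbor at distance `i − 1` from
`v 0`, then so does every `v j` with `i ≤ j ≤ l − 1`. -/
theorem downward_neighbors_propagate_right (G : SimpleGraph V) [G.LocallyFinite]
    (hconn : G.Connected) (hdeg : ∀ x : V, G.degree x ≤ 3) (hric : NonnegRicci G)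
    (hdiam : ∃ x y : V, 6 ≤ G.dist x y)
    (l : ℕ) (hl : 4 ≤ l) (v : ℕ → V)
    (hadj : ∀ i < l, G.Adj (v i) (v (i + 1)))
    (hinj : ∀ i ≤ l, ∀ j ≤ l, v i = v j → i = j)
    (hgeo : G.dist (v 0) (v l) = l)
    (i : ℕ) (hi1 : 2 ≤ i) (hi2 : i ≤ l - 1)
    (hex : ∃ u : V, G.Adj (v i) u ∧ u ≠ v (i - 1) ∧ u ≠ v (i + 1) ∧
      G.dist (v 0) u = i - 1) :
    ∀ j : ℕ, i ≤ j → j ≤ l - 1 →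
      ∃ u : V, G.Adj (v j) u ∧ u ≠ v (j - 1) ∧ u ≠ v (j + 1) ∧
        G.dist (v 0) u = j - 1 := by
  intro j hij
  induction j, hij using Nat.le_induction with
  | base => exact fun _ => hex
  | succ j hij ih =>
    intro hj
    obtain ⟨u, hu, hu_prev, -, hdu⟩ := ih (by omega)
    have hdist : ∀ k ≤ l, G.dist (v 0) (v k) = k := fun k =>
      dist_eq_of_geodesic hconn hadj hgeo
    have hd_prev := hdist (j - 1) (by omega)
    have hd := hdist j (by omega)
    have hd_next := hdist (j + 1) (by omega)
    have hd_next2 := hdist (j + 1 + 1) (by omega)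
    have hadj_prev : G.Adj (v (j - 1)) (v j) := by
      have h := hadj (j - 1) (by omega)
      rwa [Nat.sub_add_cancel (by omega : 1 ≤ j)] at h
    have hadj_next := hadj j (by omega)
    have hlapl := lapl_dist_eq_neg_one (o := v 0) (hdeg (v j)) hadj_prev.symm hu hadj_next
      hu_prev.symm (by omega) (by omega) (by omega)
    have hle := hric.lapl_dist_le hconn (o := v 0) hadj_next (by omega)
    obtain ⟨w, hw, hw_prev, hw_next, hdw⟩ := exists_closer_neighbor_of_lapl_dist_neg hconn
      (o := v 0) hadj_next.symm (hadj (j + 1) (by omega)) (by omega) (by omega)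
      (by linarith)
    exact ⟨w, hw, by simpa using hw_prev, hw_next, by omega⟩
end
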